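/- Let n ≥ 1, 1 < p < ∞, 0 < s < 1, 0 ≤ α < min{Q−2, p(1−s)}, R₀ > 0 and β > −1/(p−1). Let D_{R₀} = {ξ=(x,y,t) : |x_i| ≤ R₀, |y_i| ≤ R₀ for all i, |t| ≤ R₀²} and D_{R₀+1,t} = {ξ : |x_i| ≤ R₀+1, |y_i| ≤ R₀+1 for all i, |t| ≤ (R₀+1)² + (R₀+1)}. Suppose ψ is a smooth function with compact support in D_{R₀+1,t} such that 0 ≤ ψ ≤ 1, ψ ≡ 1 on D_{R₀}, |∂ψ/∂x_i| ≤ C₀ and |∂ψ/∂y_i| ≤ C₀ for all i, and |∂ψ/∂t| ≤ C₀/(R₀+1), for some constant C₀ > 0. Let u_{β,R₀}(ξ) = ((x₁)₊)^β ψ(ξ), where ((x₁)₊)^β = x₁^β for x₁ > 0 and 0 otherwise. Then u_{β,R₀} ∈ W^{s,p,α}_{loc(x₁)}(ℍⁿ₊) ∩ L^{p−1}_{sp,α}(ℍⁿ). -/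

import Mathlib

/-!
The function `u = (x₁)₊^β ψ` vanishes off the compact set `tsupport ψ`, and both memberships follow
from bounds on its size and on its increments.

For `L^{p-1}_{sp,α}` the weight is at most one, so it suffices that `|u|^{p-1} ≤ x₁^{β(p-1)}` is
integrable over a box, which holds because `β(p-1) > -1` (`integrable_box`,
`truncPower_lintegral`).

For the seminorm over a strip `r < x₁ < R`, the power `x₁^β` is bounded and Lipschitz there, hence so
is `u`. When one of the points `ξ, ξ'` stays in a bounded set, the Euclidean distance is at most a
constant times `d(ξ⁻¹∘ξ')` as soon as the latter is at most one (`dist_le_hd`), so that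
`|u(ξ) - u(ξ')| ≤ L min(1, d(ξ⁻¹∘ξ'))` (`truncPower_strip`). As one of the two points lies in
`tsupport ψ` whenever the integrand is nonzero, left invariance of Lebesgue measure and the symmetry
`d(η⁻¹) = d(η)` bound the seminorm by `2 L^p |tsupport ψ| ∫ min(1,d)^p / (d^{Q+sp} |z|^α)`
(`gagSem_lt_top`).

That last integral is finite (`lintegral_kern_lt_top`). No polar coordinates are needed: with
`|x_i|, |y_i| ≤ |z| ≤ d` and `|t| ≤ d²` the homogeneity is distributed over the coordinates, and the
kernel is at most a product of `2n+1` functions `|u|^{-a} max(1,|u|)^{-c}` of one variable with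
`a < 1 < a + c` (`kern_le`). The room needed for the local exponents `a < 1` is given by `α < Q - 2`
and `sp + α < p`, and the decay at infinity by `sp > 0`.
-/

open MeasureTheory Real Filter Topology ENNReal

noncomputable section

/-- The Heisenberg group `ℍⁿ` as `ℝⁿ × ℝⁿ × ℝ`. -/
abbrev Heis (n : ℕ) : Type := (Fin n → ℝ) × (Fin n → ℝ) × ℝ

/-- Group law `ξ ∘ ξ' = (x+x', y+y', t+t'+2⟨y,x'⟩−2⟨x,y'⟩)`. -/
def Hmul {n : ℕ} (a b : Heis n) : Heis n :=
  (a.1 + b.1, a.2.1 + b.2.1,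
    a.2.2 + b.2.2 + 2 * (∑ i, a.2.1 i * b.1 i) - 2 * (∑ i, a.1 i * b.2.1 i))

/-- Group inverse `ξ⁻¹ = −ξ`. -/
def Hinv {n : ℕ} (a : Heis n) : Heis n := (-a.1, -a.2.1, -a.2.2)

/-- Squared Euclidean norm of the horizontal part `z = (x,y) ∈ ℝ^{2n}`. -/
def zsq {n : ℕ} (a : Heis n) : ℝ := (∑ i, (a.1 i) ^ 2) + (∑ i, (a.2.1 i) ^ 2)

/-- Euclidean norm `|z|` of the horizontal part. -/
def znorm {n : ℕ} (a : Heis n) : ℝ := Real.sqrt (zsq a)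

/-- The Koranyi–Folland gauge `d(ξ) = (|z|⁴ + t²)^{1/4}`. -/
def hd {n : ℕ} (a : Heis n) : ℝ := ((zsq a) ^ 2 + (a.2.2) ^ 2) ^ ((1 : ℝ) / 4)

/-- Homogeneous dimension `Q = 2n + 2` (as a real number). -/
def hQ (n : ℕ) : ℝ := 2 * n + 2

/-- First coordinate `x₁` of a point of `ℍⁿ`. -/
def x1 {n : ℕ} (a : Heis n) : ℝ := if h : 0 < n then a.1 ⟨0, h⟩ else 0

/-- The half-space `ℍⁿ₊ = {ξ : x₁ > 0}`. -/
def halfSpace (n : ℕ) : Set (Heis n) := {a | 0 < x1 a}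

/-- Euclidean distance `|z - z'|` of the horizontal parts. -/
def zdist {n : ℕ} (a b : Heis n) : ℝ := znorm (Hmul (Hinv a) b)

/-- `J_p(t) = |t|^{p-2} t`. -/
def Jp (p t : ℝ) : ℝ := |t| ^ (p - 2) * t

/-- The Gagliardo-type seminorm (to the `p`-th power)
`[f]_{s,p,α,Ω}^p = ∫_Ω ∫_Ω |f(ξ)-f(ξ')|^p / (d(ξ⁻¹∘ξ')^{Q+sp} |z-z'|^α)`. -/
def gagSem {n : ℕ} (p s α : ℝ) (Ω : Set (Heis n)) (f : Heis n → ℝ) : ℝ≥0∞ :=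
  ∫⁻ ξ in Ω, ∫⁻ ξ' in Ω, ENNReal.ofReal
    (|f ξ - f ξ'| ^ p / (hd (Hmul (Hinv ξ) ξ') ^ (hQ n + s * p) * zdist ξ ξ' ^ α))

/-- The seminorm for `α = 0` (no horizontal weight). -/
def gagSem0 {n : ℕ} (p s : ℝ) (Ω : Set (Heis n)) (f : Heis n → ℝ) : ℝ≥0∞ :=
  ∫⁻ ξ in Ω, ∫⁻ ξ' in Ω, ENNReal.ofReal
    (|f ξ - f ξ'| ^ p / hd (Hmul (Hinv ξ) ξ') ^ (hQ n + s * p))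

/-- The strip `𝒟_{r,R} = {ξ : r < x₁ < R}`. -/
def strip (n : ℕ) (r R : ℝ) : Set (Heis n) := {ξ | r < x1 ξ ∧ x1 ξ < R}

/-- `f ∈ W^{s,p,α}_{loc(x₁)}(ℍⁿ₊)`. -/
def MemWlocx1 (n : ℕ) (p s α : ℝ) (f : Heis n → ℝ) : Prop :=
  Measurable f ∧ ∀ r R : ℝ, 0 < r → r < R →
    (∫⁻ ξ in strip n r R, ENNReal.ofReal (|f ξ| ^ p)) < ⊤ ∧
    gagSem p s α (strip n r R) f < ⊤

/-- `f ∈ L^{p-1}_{sp,α}(ℍⁿ)`. -/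
def MemLsp (n : ℕ) (p s α : ℝ) (f : Heis n → ℝ) : Prop :=
  Measurable f ∧
  (∀ K : Set (Heis n), IsCompact K →
    (∫⁻ ξ in K, ENNReal.ofReal (|f ξ| ^ (p - 1))) < ⊤) ∧
  (∫⁻ ξ, ENNReal.ofReal (|f ξ| ^ (p - 1) /
      ((1 + hd ξ) ^ (hQ n + s * p) * (1 + znorm ξ) ^ α))) < ⊤

/-- `φ ∈ W^{s,p,α}(Ω)`. -/
def MemW (n : ℕ) (p s α : ℝ) (Ω : Set (Heis n)) (φ : Heis n → ℝ) : Prop :=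
  Measurable φ ∧ (∫⁻ ξ in Ω, ENNReal.ofReal (|φ ξ| ^ p)) < ⊤ ∧ gagSem p s α Ω φ < ⊤

/-- `φ ∈ W^{s,p}(Ω)` (the case `α = 0`). -/
def MemW0 (n : ℕ) (p s : ℝ) (Ω : Set (Heis n)) (φ : Heis n → ℝ) : Prop :=
  Measurable φ ∧ (∫⁻ ξ in Ω, ENNReal.ofReal (|φ ξ| ^ p)) < ⊤ ∧ gagSem0 p s Ω φ < ⊤

/-- `f ∈ W^{s,p}_{loc}(ℍⁿ₊)`. -/
def MemWloc0 (n : ℕ) (p s : ℝ) (f : Heis n → ℝ) : Prop :=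
  Measurable f ∧ ∀ K : Set (Heis n), IsCompact K → K ⊆ halfSpace n →
    (∫⁻ ξ in K, ENNReal.ofReal (|f ξ| ^ p)) < ⊤ ∧ gagSem0 p s K f < ⊤

/-- `f ∈ L^{p-1}_{sp}(ℍⁿ)`. -/
def MemLsp0 (n : ℕ) (p s : ℝ) (f : Heis n → ℝ) : Prop :=
  Measurable f ∧
  (∀ K : Set (Heis n), IsCompact K →
    (∫⁻ ξ in K, ENNReal.ofReal (|f ξ| ^ (p - 1))) < ⊤) ∧
  (∫⁻ ξ, ENNReal.ofReal (|f ξ| ^ (p - 1) / (1 + hd ξ) ^ (hQ n + s * p))) < ⊤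

/-- Surface measure of the unit sphere `S^{m-1} ⊂ ℝ^m`: `|S^{m-1}| = 2π^{m/2}/Γ(m/2)`. -/
def sphereArea (m : ℕ) : ℝ := 2 * Real.pi ^ ((m : ℝ) / 2) / Real.Gamma ((m : ℝ) / 2)

/-- `ℐ(k,θ,α) = (∫₀^∞ (1+t²)^{-(k+2+θ)/4} dt) (∫₀^∞ r^{k-2}(1+r²)^{-(k+θ+α)/2} dr)`. -/
def calI (k : ℕ) (θ α : ℝ) : ℝ :=
  (∫ t in Set.Ioi (0 : ℝ), (1 + t ^ 2) ^ (-(((k : ℝ) + 2 + θ) / 4))) *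
  (∫ r in Set.Ioi (0 : ℝ), r ^ ((k : ℝ) - 2) * (1 + r ^ 2) ^ (-(((k : ℝ) + θ + α) / 2)))

/-- `Λ_{s,p,α} = 2∫₀¹ |1-τ^{(sp+α-1)/p}|^p/(1-τ)^{1+sp+α} dτ + 2/(sp+α)`. -/
def LamC (s p α : ℝ) : ℝ :=
  2 * (∫ τ in Set.Ioo (0 : ℝ) 1,
      |1 - τ ^ ((s * p + α - 1) / p)| ^ p / (1 - τ) ^ (1 + s * p + α)) + 2 / (s * p + α)

/-- `u_β(τ) = τ^β` for `τ > 0`, extended by `0`. -/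
def ubeta (β τ : ℝ) : ℝ := if 0 < τ then τ ^ β else 0

/-- `λ(β,s,p)`. -/
def lam (p s β : ℝ) : ℝ :=
  2 * (∫ τ in Set.Ioo (0 : ℝ) 1,
      Jp p (1 - τ ^ β) * (1 - τ ^ (s * p - 1 - β * (p - 1))) / (1 - τ) ^ (1 + s * p)) +
  2 / (s * p)

/-- `λ_ε(β,s,p)`. -/
def lamEps (p s β ε : ℝ) : ℝ :=
  2 * (∫ τ in Set.Ioo (0 : ℝ) (1 / (1 + ε)), Jp p (1 - τ ^ β) / |1 - τ| ^ (1 + s * p)) +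
  2 * (∫ τ in Set.Ioi (1 + ε), Jp p (1 - τ ^ β) / |1 - τ| ^ (1 + s * p)) +
  2 / (s * p)

/-- The box `D_{R₀}`. -/
def boxD (n : ℕ) (R₀ : ℝ) : Set (Heis n) :=
  {ξ | (∀ i, |ξ.1 i| ≤ R₀) ∧ (∀ i, |ξ.2.1 i| ≤ R₀) ∧ |ξ.2.2| ≤ R₀ ^ 2}

/-- The box `D_{R₀,t}`. -/
def boxDt (n : ℕ) (R₀ : ℝ) : Set (Heis n) :=
  {ξ | (∀ i, |ξ.1 i| ≤ R₀) ∧ (∀ i, |ξ.2.1 i| ≤ R₀) ∧ |ξ.2.2| ≤ R₀ ^ 2 + R₀}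

/-! ### The majorant and its integrability -/

/-- One-dimensional profile `|u|^{-a} max(1,|u|)^{-c}`: the exponent `a` measures the singularity
at the origin, `a + c` the decay at infinity. -/
def phi (a c u : ℝ) : ℝ := |u| ^ (-a) * (max 1 |u|) ^ (-c)

lemma phi_nonneg (a c u : ℝ) : 0 ≤ phi a c u := by unfold phi; positivity

lemma phi_neg (a c u : ℝ) : phi a c (-u) = phi a c u := by unfold phi; rw [abs_neg]

lemma integrable_phi {a c : ℝ} (ha : a < 1) (hac : 1 < a + c) : Integrable (phi a c) := by
  have h01 : IntegrableOn (phi a c) (Set.Ioc 0 1) := by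
    have h : IntegrableOn (fun x : ℝ => x ^ (-a)) (Set.Ioc 0 1) := by
      have := intervalIntegral.intervalIntegrable_rpow' (a := 0) (b := 1) (r := -a) (by linarith)
      rwa [intervalIntegrable_iff_integrableOn_Ioc_of_le zero_le_one] at this
    refine h.congr_fun (fun x hx => ?_) measurableSet_Ioc
    simp [phi, abs_of_pos hx.1, max_eq_left hx.2]
  have h1 : IntegrableOn (phi a c) (Set.Ioi 1) := by
    have h := integrableOn_Ioi_rpow_of_lt (a := -(a + c)) (by linarith) one_pos
    refine h.congr_fun (fun x hx => ?_) measurableSet_Ioi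
    have hx' : (1 : ℝ) < x := hx
    have hx0 : 0 < x := by linarith
    simp only [phi, abs_of_pos hx0, max_eq_right hx'.le, ← Real.rpow_add hx0]
    congr 1; ring
  have h0 : IntegrableOn (phi a c) (Set.Ioi 0) := by
    rw [← Set.Ioc_union_Ioi_eq_Ioi (zero_le_one (α := ℝ))]
    exact h01.union h1
  have hm : IntegrableOn (phi a c) (Set.Iio 0) := by
    rw [← (Measure.measurePreserving_neg (volume : Measure ℝ)).integrableOn_comp_preimage
      (Homeomorph.neg ℝ).measurableEmbedding]
    simpa [Function.comp_def, phi_neg] using h0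
  have hm' : IntegrableOn (phi a c) (Set.Iic 0) := by
    rwa [integrableOn_Iic_iff_integrableOn_Iio]
  rw [← integrableOn_univ, ← Set.Iic_union_Ioi (a := (0 : ℝ))]
  exact hm'.union h0

lemma integrable_phi_prod (n : ℕ) {a c a' c' : ℝ} (ha : a < 1) (hac : 1 < a + c)
    (ha' : a' < 1) (hac' : 1 < a' + c') :
    Integrable (fun η : Heis n =>
      (∏ i, phi a c (η.1 i)) * ((∏ i, phi a c (η.2.1 i)) * phi a' c' η.2.2)) := by
  have h : Integrable (fun x : Fin n → ℝ => ∏ i, phi a c (x i)) :=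
    Integrable.fintype_prod (f := fun _ => phi a c) (fun _ => integrable_phi ha hac)
  exact h.mul_prod (h.mul_prod (integrable_phi ha' hac'))

/-! ### Elementary facts on the gauge -/

section

variable {n : ℕ}

lemma zsq_nonneg (η : Heis n) : 0 ≤ zsq η := by unfold zsq; positivity

lemma znorm_nonneg (η : Heis n) : 0 ≤ znorm η := Real.sqrt_nonneg _

lemma hd_nonneg (η : Heis n) : 0 ≤ hd η := by unfold hd; positivity

lemma hd_pow_four (η : Heis n) : hd η ^ 4 = zsq η ^ 2 + η.2.2 ^ 2 := by
  unfold hd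
  rw [← Real.rpow_natCast, ← Real.rpow_mul (by positivity)]
  norm_num

lemma znorm_le_hd (η : Heis n) : znorm η ≤ hd η := by
  refine le_of_pow_le_pow_left₀ (n := 4) (by norm_num) (hd_nonneg η) ?_
  have : znorm η ^ 2 = zsq η := Real.sq_sqrt (zsq_nonneg η)
  rw [hd_pow_four, show znorm η ^ 4 = (znorm η ^ 2) ^ 2 by ring, this]
  nlinarith [sq_nonneg η.2.2]

lemma abs_t_le_hd (η : Heis n) : |η.2.2| ≤ hd η ^ 2 := by
  refine abs_le_of_sq_le_sq ?_ (by positivity)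
  rw [show (hd η ^ 2) ^ 2 = hd η ^ 4 by ring, hd_pow_four]
  nlinarith [sq_nonneg (zsq η)]

lemma abs_x_le_znorm (η : Heis n) (i : Fin n) : |η.1 i| ≤ znorm η := by
  refine Real.abs_le_sqrt ?_
  have h1 := Finset.single_le_sum (f := fun i => η.1 i ^ 2) (fun i _ => sq_nonneg _)
    (Finset.mem_univ i)
  have h2 : 0 ≤ ∑ i, η.2.1 i ^ 2 := by positivity
  unfold zsq; linarith

lemma abs_y_le_znorm (η : Heis n) (i : Fin n) : |η.2.1 i| ≤ znorm η := by
  refine Real.abs_le_sqrt ?_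
  have h1 := Finset.single_le_sum (f := fun i => η.2.1 i ^ 2) (fun i _ => sq_nonneg _)
    (Finset.mem_univ i)
  have h2 : 0 ≤ ∑ i, η.1 i ^ 2 := by positivity
  unfold zsq; linarith

lemma measurable_hd : Measurable (hd (n := n)) := by unfold hd zsq; fun_prop

lemma measurable_znorm : Measurable (znorm (n := n)) := by unfold znorm zsq; fun_prop

lemma zsq_Hinv (η : Heis n) : zsq (Hinv η) = zsq η := by simp [zsq, Hinv]

lemma znorm_Hinv (η : Heis n) : znorm (Hinv η) = znorm η := by simp [znorm, zsq_Hinv]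

lemma hd_Hinv (η : Heis n) : hd (Hinv η) = hd η := by simp [hd, zsq_Hinv]; simp [Hinv]

lemma Hinv_Hmul (a b : Heis n) : Hinv (Hmul (Hinv a) b) = Hmul (Hinv b) a := by
  simp only [Hinv, Hmul, Prod.mk.injEq]
  refine ⟨by abel, by abel, ?_⟩
  simp only [Pi.neg_apply, neg_mul, Finset.sum_neg_distrib]
  simp only [mul_comm (b.2.1 _), mul_comm (b.1 _)]
  ring

/-! ### The kernel -/

/-- The convolution kernel `min(1,d)^p / (d^{Q+sp} |z|^α)` that dominates the Gagliardo integrand. -/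
def kern (n : ℕ) (p s α : ℝ) (η : Heis n) : ℝ :=
  min 1 (hd η) ^ p / (hd η ^ (hQ n + s * p) * znorm η ^ α)

lemma kern_nonneg (p s α : ℝ) (η : Heis n) : 0 ≤ kern n p s α η := by
  unfold kern
  have := hd_nonneg η
  have := znorm_nonneg η
  have : 0 ≤ min 1 (hd η) := le_min zero_le_one (hd_nonneg η)
  positivity

lemma measurable_kern (p s α : ℝ) : Measurable (kern n p s α) := by
  unfold kern
  have := measurable_hd (n := n)
  have := measurable_znorm (n := n)
  fun_prop

/-- Away from the coordinate hyperplanes the kernel is at most a product of one-dimensional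
profiles. The powers of `|z|` and `d` are shared out among the coordinates by means of
`|x_i|, |y_i| ≤ |z| ≤ d` and `|t| ≤ d²`. -/
lemma kern_le (hn : 1 ≤ n) {p s α ε : ℝ} (hp : 0 < p) (hs0 : 0 < s) (hα0 : 0 ≤ α) (hε : 0 < ε)
    (hε1 : ε ≤ 1) (hεn : ε ≤ 2 * n - α) (hεp : 2 * ε ≤ p * (1 - s) - α) (η : Heis n)
    (hx : ∀ i, η.1 i ≠ 0) (hy : ∀ i, η.2.1 i ≠ 0) (ht : η.2.2 ≠ 0) :
    kern n p s α η ≤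
      (∏ i, phi (1 - ε / (2 * n)) ((ε + s * p / 2) / (2 * n)) (η.1 i)) *
      ((∏ i, phi (1 - ε / (2 * n)) ((ε + s * p / 2) / (2 * n)) (η.2.1 i)) *
        phi (1 - ε / 2) ((ε + s * p / 2) / 2) η.2.2) := by
  have hsp : 0 < s * p := by positivity
  have hn0 : (1 : ℝ) ≤ n := by exact_mod_cast hn
  have hz0 : 0 < znorm η := (abs_pos.2 (hx ⟨0, hn⟩)).trans_le (abs_x_le_znorm η _)
  have hd0 : 0 < hd η := hz0.trans_le (znorm_le_hd η)
  set a := 1 - ε / (2 * n) with ha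
  set c := (ε + s * p / 2) / (2 * n) with hc
  have ha0 : 0 ≤ a := by
    rw [ha, sub_nonneg, div_le_one (by positivity)]; linarith
  have hc0 : 0 ≤ c := by positivity
  set ζ := znorm η
  set d := hd η
  have hζd : ζ ≤ d := znorm_le_hd η
  have hM : 0 < max 1 d := by positivity
  have hphi : ∀ u : ℝ, u ≠ 0 → |u| ≤ ζ → ζ ^ (-a) * max 1 d ^ (-c) ≤ phi a c u := by
    intro u hu hu'
    have h1 := abs_pos.2 hu
    unfold phi
    refine mul_le_mul ?_ ?_ (by positivity) (by positivity)
    · exact Real.rpow_le_rpow_of_nonpos h1 hu' (by linarith)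
    · exact Real.rpow_le_rpow_of_nonpos (by positivity)
        (max_le_max le_rfl (hu'.trans hζd)) (by linarith)
  have hX : (ζ ^ (-a) * max 1 d ^ (-c)) ^ n ≤ ∏ i, phi a c (η.1 i) := by
    have := Finset.prod_le_prod (s := Finset.univ) (f := fun _ : Fin n => ζ ^ (-a) * max 1 d ^ (-c))
      (fun i _ => by positivity) (fun i _ => hphi _ (hx i) (abs_x_le_znorm η i))
    simpa using this
  have hY : (ζ ^ (-a) * max 1 d ^ (-c)) ^ n ≤ ∏ i, phi a c (η.2.1 i) := by
    have := Finset.prod_le_prod (s := Finset.univ) (f := fun _ : Fin n => ζ ^ (-a) * max 1 d ^ (-c))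
      (fun i _ => by positivity) (fun i _ => hphi _ (hy i) (abs_y_le_znorm η i))
    simpa using this
  have hT : d ^ (-(2 - ε)) * max 1 d ^ (-(ε + s * p / 2)) ≤
      phi (1 - ε / 2) ((ε + s * p / 2) / 2) η.2.2 := by
    have h1 := abs_pos.2 ht
    have h2 := abs_t_le_hd η
    unfold phi
    have e1 : d ^ (-(2 - ε)) = (d ^ 2) ^ (-(1 - ε / 2)) := by
      rw [← Real.rpow_natCast d 2, ← Real.rpow_mul hd0.le]; congr 1; push_cast; ring
    have e2 : max 1 d ^ (-(ε + s * p / 2)) = (max 1 d ^ 2) ^ (-((ε + s * p / 2) / 2)) := by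
      rw [← Real.rpow_natCast _ 2, ← Real.rpow_mul hM.le]; congr 1; push_cast; ring
    rw [e1, e2]
    refine mul_le_mul ?_ ?_ (by positivity) (by positivity)
    · exact Real.rpow_le_rpow_of_nonpos h1 h2 (by linarith)
    · refine Real.rpow_le_rpow_of_nonpos (by positivity) ?_ (by linarith)
      refine max_le (one_le_pow₀ (le_max_left _ _)) (h2.trans ?_)
      exact pow_le_pow_left₀ hd0.le (le_max_right _ _) 2
  have hXe : (ζ ^ (-a) * max 1 d ^ (-c)) ^ n * (ζ ^ (-a) * max 1 d ^ (-c)) ^ n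
      = ζ ^ (-(2 * n - ε)) * max 1 d ^ (-(ε + s * p / 2)) := by
    rw [← mul_pow, mul_mul_mul_comm, ← Real.rpow_add hz0, ← Real.rpow_add hM, mul_pow,
      ← Real.rpow_natCast, ← Real.rpow_natCast, ← Real.rpow_mul hz0.le, ← Real.rpow_mul hM.le]
    congr 2
    · rw [ha]; field_simp; ring
    · rw [hc]; field_simp; ring
  have key : min 1 d ^ p ≤ d ^ (s * p + 2 * ε + α) * max 1 d ^ (-(2 * ε + s * p)) := by
    rcases le_total d 1 with h | h
    · rw [min_eq_right h, max_eq_left h, Real.one_rpow, mul_one]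
      exact Real.rpow_le_rpow_of_exponent_ge hd0 h (by linarith)
    · rw [min_eq_left h, max_eq_right h, Real.one_rpow, ← Real.rpow_add hd0]
      exact Real.one_le_rpow h (by linarith)
  have hζ : ζ ^ (2 * n - ε - α) ≤ d ^ (2 * n - ε - α) :=
    Real.rpow_le_rpow hz0.le hζd (by linarith)
  calc kern n p s α η = min 1 d ^ p * d ^ (-(hQ n + s * p)) * ζ ^ (-α) := by
        unfold kern
        rw [Real.rpow_neg hd0.le, Real.rpow_neg hz0.le, div_eq_mul_inv, mul_inv, mul_assoc]
    _ = min 1 d ^ p * d ^ (-(hQ n + s * p)) * (ζ ^ (2 * n - ε - α) * ζ ^ (-(2 * n - ε))) := by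
        rw [← Real.rpow_add hz0]; congr 2; ring
    _ ≤ (d ^ (s * p + 2 * ε + α) * max 1 d ^ (-(2 * ε + s * p))) * d ^ (-(hQ n + s * p)) *
          (d ^ (2 * n - ε - α) * ζ ^ (-(2 * n - ε))) := by gcongr
    _ = (d ^ (s * p + 2 * ε + α) * d ^ (-(hQ n + s * p)) * d ^ (2 * n - ε - α)) *
          max 1 d ^ (-(2 * ε + s * p)) * ζ ^ (-(2 * n - ε)) := by ring
    _ = d ^ (-(2 - ε)) * max 1 d ^ (-(2 * ε + s * p)) * ζ ^ (-(2 * n - ε)) := by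
        rw [← Real.rpow_add hd0, ← Real.rpow_add hd0]
        congr 3; unfold hQ; ring
    _ = (ζ ^ (-(2 * n - ε)) * max 1 d ^ (-(ε + s * p / 2))) *
          (d ^ (-(2 - ε)) * max 1 d ^ (-(ε + s * p / 2))) := by
        rw [show -(2 * ε + s * p) = -(ε + s * p / 2) + -(ε + s * p / 2) by ring,
          Real.rpow_add hM]
        ring
    _ ≤ _ := by
        have := fun u => phi_nonneg a c u
        rw [← hXe, mul_assoc]
        gcongr
        · exact Finset.prod_nonneg fun i _ => this _
        · exact Finset.prod_nonneg fun i _ => this _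

/-- The kernel is integrable: near the origin because `sp + α < p`, at infinity because `s p > 0`,
and along `z = 0` because `α < 2n`. -/
lemma lintegral_kern_lt_top (hn : 1 ≤ n) {p s α : ℝ} (hp : 0 < p) (hs0 : 0 < s)
    (hα0 : 0 ≤ α) (hαn : α < 2 * n) (hαp : α < p * (1 - s)) :
    (∫⁻ η, ENNReal.ofReal (kern n p s α η)) < ⊤ := by
  have hn0 : (1 : ℝ) ≤ n := by exact_mod_cast hn
  have hsp : 0 < s * p := by positivity
  obtain ⟨ε, hε, hε'⟩ : ∃ ε : ℝ, 0 < ε ∧ ε ≤ min 1 (min (2 * n - α) ((p * (1 - s) - α) / 2)) :=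
    ⟨_, lt_min one_pos (lt_min (by linarith) (by linarith)), le_rfl⟩
  simp only [le_min_iff] at hε'
  obtain ⟨h1, h2, h3⟩ := hε'
  have hint := integrable_phi_prod n (a := 1 - ε / (2 * n)) (c := (ε + s * p / 2) / (2 * n))
    (a' := 1 - ε / 2) (c' := (ε + s * p / 2) / 2)
    (by have : 0 < ε / (2 * n) := by positivity
        linarith)
    (by have : 0 < s * p / 2 / (2 * n) := by positivity
        rw [add_div]; linarith)
    (by linarith) (by linarith)
  refine lt_of_le_of_lt (lintegral_mono_ae ?_) hint.lintegral_lt_top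
  have hpi : ∀ᵐ x : Fin n → ℝ, ∀ i, x i ≠ 0 :=
    ae_all_iff.2 fun i => Measure.ae_eval_ne (fun _ => volume) i 0
  have ht : ∀ᵐ t : ℝ, t ≠ 0 := by simp [ae_iff]
  have q1 : ∀ᵐ η : Heis n, ∀ i, η.1 i ≠ 0 := Measure.quasiMeasurePreserving_fst.ae hpi
  have q2 : ∀ᵐ η : Heis n, ∀ i, η.2.1 i ≠ 0 :=
    Measure.quasiMeasurePreserving_snd.ae (Measure.quasiMeasurePreserving_fst.ae hpi)
  have q3 : ∀ᵐ η : Heis n, η.2.2 ≠ 0 :=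
    Measure.quasiMeasurePreserving_snd.ae (Measure.quasiMeasurePreserving_snd.ae ht)
  filter_upwards [q1, q2, q3] with η e1 e2 e3
  exact ENNReal.ofReal_le_ofReal (kern_le hn hp hs0 hα0 hε h1 h2 (by linarith) η e1 e2 e3)

lemma kern_symm (p s α : ℝ) (a b : Heis n) :
    kern n p s α (Hmul (Hinv a) b) = kern n p s α (Hmul (Hinv b) a) := by
  rw [← Hinv_Hmul b a]; unfold kern; rw [hd_Hinv, znorm_Hinv]

lemma measurable_Hmul : Measurable (fun q : Heis n × Heis n => Hmul (Hinv q.1) q.2) := by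
  unfold Hmul Hinv
  simp only [Pi.neg_apply]
  fun_prop

/-- Lebesgue measure is a Haar measure of `ℍⁿ`: left translations are triangular affine maps with
unit diagonal. -/
lemma lintegral_left_translate (K : Heis n → ℝ≥0∞) (hK : Measurable K) (a : Heis n) :
    ∫⁻ b, K (Hmul (Hinv a) b) = ∫⁻ b, K b := by
  have hm : Measurable (fun b : Heis n => Hmul (Hinv a) b) :=
    measurable_Hmul.comp (measurable_const.prodMk measurable_id)
  have hv : (volume : Measure (Heis n)) = volume.prod (volume.prod volume) := rfl
  have key : ∀ F : Heis n → ℝ≥0∞, Measurable F →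
      ∫⁻ b, F b = ∫⁻ x, ∫⁻ y, ∫⁻ t, F (x, y, t) := by
    intro F hF
    rw [hv, lintegral_prod _ hF.aemeasurable]
    refine lintegral_congr fun x => ?_
    rw [lintegral_prod _ (by fun_prop)]
  rw [key _ hK, key (fun b => K (Hmul (Hinv a) b)) (hK.comp hm)]
  refine Eq.trans ?_ (lintegral_add_right_eq_self (fun x => ∫⁻ y, ∫⁻ t, K (x, y, t)) (-a.1))
  refine lintegral_congr fun x => ?_
  refine Eq.trans ?_ (lintegral_add_right_eq_self (fun y => ∫⁻ t, K (x + -a.1, y, t)) (-a.2.1))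
  refine lintegral_congr fun y => ?_
  refine Eq.trans ?_ (lintegral_add_right_eq_self (fun t => K (x + -a.1, y + -a.2.1, t))
    (-a.2.2 + 2 * (∑ i, (-a.2.1) i * x i) - 2 * (∑ i, (-a.1) i * y i)))
  refine lintegral_congr fun t => ?_
  congr 1
  simp only [Hmul, Hinv, Prod.mk.injEq]
  exact ⟨by abel, by abel, by ring⟩

/-! ### Finiteness of the Gagliardo seminorm -/

/-- Integrating a symmetric left-invariant kernel over the pairs with a given point in `S`. -/
lemma lintegral_translates {S : Set (Heis n)} (hS : MeasurableSet S) {k : Heis n → ℝ≥0∞}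
    (hk : Measurable k) (hsymm : ∀ a b, k (Hmul (Hinv a) b) = k (Hmul (Hinv b) a)) :
    ∫⁻ ξ, ∫⁻ ξ', (S.indicator 1 ξ * k (Hmul (Hinv ξ) ξ') +
      S.indicator 1 ξ' * k (Hmul (Hinv ξ) ξ')) =
      (volume S * ∫⁻ η, k η) + volume S * ∫⁻ η, k η := by
  have hk2 : Measurable (fun q : Heis n × Heis n => k (Hmul (Hinv q.1) q.2)) :=
    hk.comp measurable_Hmul
  have hk1 : ∀ ξ : Heis n, Measurable (fun ξ' => k (Hmul (Hinv ξ) ξ')) := fun ξ =>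
    hk2.comp (measurable_const.prodMk measurable_id)
  have h1m : Measurable (S.indicator (1 : Heis n → ℝ≥0∞)) := measurable_one.indicator hS
  have hl : ∀ ξ : Heis n, ∫⁻ ξ', S.indicator 1 ξ * k (Hmul (Hinv ξ) ξ') =
      S.indicator 1 ξ * ∫⁻ η, k η := fun ξ => by
    rw [lintegral_const_mul _ (hk1 ξ), lintegral_left_translate k hk ξ]
  have hleft : ∫⁻ ξ, ∫⁻ ξ', S.indicator 1 ξ * k (Hmul (Hinv ξ) ξ') = volume S * ∫⁻ η, k η := by
    simp_rw [hl]
    rw [lintegral_mul_const _ h1m, lintegral_indicator_one hS]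
  have hright : ∫⁻ ξ, ∫⁻ ξ', S.indicator 1 ξ' * k (Hmul (Hinv ξ) ξ') = volume S * ∫⁻ η, k η := by
    rw [lintegral_lintegral_swap, ← hleft]
    · refine lintegral_congr fun a => lintegral_congr fun b => ?_
      rw [hsymm]
    · exact ((h1m.comp measurable_snd).mul hk2).aemeasurable
  have hadd : ∀ ξ : Heis n, ∫⁻ ξ', (S.indicator 1 ξ * k (Hmul (Hinv ξ) ξ') +
      S.indicator 1 ξ' * k (Hmul (Hinv ξ) ξ')) =
      S.indicator 1 ξ * (∫⁻ η, k η) + ∫⁻ ξ', S.indicator 1 ξ' * k (Hmul (Hinv ξ) ξ') := fun ξ => by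
    rw [lintegral_add_left ((hk1 ξ).const_mul _), hl]
  simp_rw [hadd]
  rw [lintegral_add_left (h1m.mul_const _), hright, lintegral_mul_const _ h1m,
    lintegral_indicator_one hS]

/-- A function that vanishes off a set `S` of finite measure and whose increments over `Ω` are at
most `L min(1, d(ξ⁻¹∘ξ'))` has finite seminorm: by left invariance and symmetry of the kernel the double integral is at most `2 L^p |S| ∫ kern`. -/
lemma gagSem_lt_top (hn : 1 ≤ n) {p s α : ℝ} (hp : 0 < p) (hs0 : 0 < s)
    (hα0 : 0 ≤ α) (hαn : α < 2 * n) (hαp : α < p * (1 - s)) {Ω S : Set (Heis n)}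
    (hΩ : MeasurableSet Ω) (hS : MeasurableSet S) (hSfin : volume S < ⊤) {f : Heis n → ℝ} {L : ℝ}
    (hL : 0 ≤ L)
    (hf : ∀ ξ ∈ Ω, ∀ ξ' ∈ Ω, |f ξ - f ξ'| ≤ L * min 1 (hd (Hmul (Hinv ξ) ξ')))
    (hf0 : ∀ ξ, ξ ∉ S → f ξ = 0) :
    gagSem p s α Ω f < ⊤ := by
  set k : Heis n → ℝ≥0∞ := fun η => ENNReal.ofReal (kern n p s α η) with hk
  have hkm : Measurable k := (measurable_kern p s α).ennreal_ofReal
  have hkfin : ∫⁻ η, k η < ⊤ := lintegral_kern_lt_top hn hp hs0 hα0 hαn hαp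
  have hpt : ∀ ξ ∈ Ω, ∀ ξ' ∈ Ω, ENNReal.ofReal
      (|f ξ - f ξ'| ^ p / (hd (Hmul (Hinv ξ) ξ') ^ (hQ n + s * p) * zdist ξ ξ' ^ α)) ≤
      ENNReal.ofReal (L ^ p) * (S.indicator 1 ξ * k (Hmul (Hinv ξ) ξ') +
        S.indicator 1 ξ' * k (Hmul (Hinv ξ) ξ')) := by
    intro ξ hξ ξ' hξ'
    by_cases hor : ξ ∈ S ∨ ξ' ∈ S
    · have h1 : ENNReal.ofReal
          (|f ξ - f ξ'| ^ p / (hd (Hmul (Hinv ξ) ξ') ^ (hQ n + s * p) * zdist ξ ξ' ^ α)) ≤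
          ENNReal.ofReal (L ^ p) * k (Hmul (Hinv ξ) ξ') := by
        rw [hk, ← ENNReal.ofReal_mul (by positivity)]
        refine ENNReal.ofReal_le_ofReal ?_
        unfold kern zdist
        rw [← mul_div_assoc, ← Real.mul_rpow hL (le_min zero_le_one (hd_nonneg _))]
        have := hd_nonneg (Hmul (Hinv ξ) ξ')
        have := znorm_nonneg (Hmul (Hinv ξ) ξ')
        gcongr
        exact hf ξ hξ ξ' hξ'
      refine h1.trans ?_
      gcongr
      rcases hor with h | h
      · simp [h]
      · simp [h]
    · push Not at hor
      rw [hf0 ξ hor.1, hf0 ξ' hor.2]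
      simp [Real.zero_rpow hp.ne']
  calc gagSem p s α Ω f
      ≤ ∫⁻ ξ in Ω, ∫⁻ ξ' in Ω, ENNReal.ofReal (L ^ p) * (S.indicator 1 ξ * k (Hmul (Hinv ξ) ξ') +
        S.indicator 1 ξ' * k (Hmul (Hinv ξ) ξ')) :=
        setLIntegral_mono' hΩ fun ξ hξ => setLIntegral_mono' hΩ fun ξ' hξ' => hpt ξ hξ ξ' hξ'
    _ ≤ ∫⁻ ξ, ∫⁻ ξ', ENNReal.ofReal (L ^ p) * (S.indicator 1 ξ * k (Hmul (Hinv ξ) ξ') +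
        S.indicator 1 ξ' * k (Hmul (Hinv ξ) ξ')) :=
        (setLIntegral_le_lintegral _ _).trans (lintegral_mono fun ξ => setLIntegral_le_lintegral _ _)
    _ = ENNReal.ofReal (L ^ p) * ((volume S * ∫⁻ η, k η) + volume S * ∫⁻ η, k η) := by
        rw [← lintegral_translates hS hkm fun a b => by simp only [hk]; rw [kern_symm],
          ← lintegral_const_mul' _ _ ENNReal.ofReal_ne_top]
        refine lintegral_congr fun ξ => ?_
        rw [lintegral_const_mul' _ _ ENNReal.ofReal_ne_top]
    _ < ⊤ := by
        have := ENNReal.mul_lt_top hSfin hkfin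
        exact ENNReal.mul_lt_top ENNReal.ofReal_lt_top (ENNReal.add_lt_top.2 ⟨this, this⟩)

/-- On a bounded set the Euclidean distance is locally controlled by the gauge distance: the twist
`2⟨y,x'⟩ − 2⟨x,y'⟩` only involves the horizontal increment `z' − z`. -/
lemma dist_le_hd {B : ℝ} (ξ ξ' : Heis n) (hx : ∀ i, |ξ.1 i| ≤ B)
    (hy : ∀ i, |ξ.2.1 i| ≤ B) (hB : 0 ≤ B) (h1 : hd (Hmul (Hinv ξ) ξ') ≤ 1) :
    dist ξ ξ' ≤ (1 + 4 * n * B) * hd (Hmul (Hinv ξ) ξ') := by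
  set η := Hmul (Hinv ξ) ξ' with hη
  set d := hd η
  have hd0 : 0 ≤ d := hd_nonneg η
  have hle : d ≤ (1 + 4 * n * B) * d := le_mul_of_one_le_left hd0 (by
    have : 0 ≤ 4 * n * B := by positivity
    linarith)
  have hX : ∀ i, |ξ'.1 i - ξ.1 i| ≤ d := fun i => by
    have := (abs_x_le_znorm η i).trans (znorm_le_hd η)
    rwa [show η.1 i = ξ'.1 i - ξ.1 i by simp [hη, Hmul, Hinv]; ring] at this
  have hY : ∀ i, |ξ'.2.1 i - ξ.2.1 i| ≤ d := fun i => by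
    have := (abs_y_le_znorm η i).trans (znorm_le_hd η)
    rwa [show η.2.1 i = ξ'.2.1 i - ξ.2.1 i by simp [hη, Hmul, Hinv]; ring] at this
  have hT : |η.2.2| ≤ d := (abs_t_le_hd η).trans (by rw [sq]; exact mul_le_of_le_one_left hd0 h1)
  have hsum : |∑ i, (ξ.2.1 i * (ξ'.1 i - ξ.1 i) - ξ.1 i * (ξ'.2.1 i - ξ.2.1 i))| ≤
      n * (2 * B * d) := by
    refine (Finset.abs_sum_le_sum_abs _ _).trans ?_
    refine (Finset.sum_le_card_nsmul _ _ (2 * B * d) fun i _ => ?_).trans (by simp)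
    refine (abs_sub _ _).trans ?_
    rw [abs_mul, abs_mul]
    have := mul_le_mul (hy i) (hX i) (abs_nonneg _) hB
    have := mul_le_mul (hx i) (hY i) (abs_nonneg _) hB
    linarith
  have ht : ξ'.2.2 - ξ.2.2 = η.2.2 +
      2 * ∑ i, (ξ.2.1 i * (ξ'.1 i - ξ.1 i) - ξ.1 i * (ξ'.2.1 i - ξ.2.1 i)) := by
    simp only [hη, Hmul, Hinv, Pi.neg_apply, neg_mul, Finset.sum_neg_distrib, mul_sub,
      Finset.sum_sub_distrib]
    simp only [mul_comm (ξ.2.1 _) (ξ.1 _)]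
    ring
  rw [Prod.dist_eq, Prod.dist_eq]
  refine max_le ?_ (max_le ?_ ?_)
  · refine ((dist_pi_le_iff hd0).2 fun i => ?_).trans hle
    rw [dist_comm]; exact hX i
  · refine ((dist_pi_le_iff hd0).2 fun i => ?_).trans hle
    rw [dist_comm]; exact hY i
  · rw [dist_comm, Real.dist_eq, ht]
    refine (abs_add_le _ _).trans ?_
    rw [abs_mul, abs_two]
    nlinarith

/-! ### The truncated power -/

lemma x1_eq (hn : 1 ≤ n) (ξ : Heis n) : x1 ξ = ξ.1 ⟨0, hn⟩ := dif_pos hn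

lemma measurable_x1 (hn : 1 ≤ n) : Measurable (x1 (n := n)) := by
  have : x1 (n := n) = fun ξ => ξ.1 ⟨0, hn⟩ := funext (x1_eq hn)
  rw [this]; fun_prop

lemma measurableSet_strip (hn : 1 ≤ n) (r R : ℝ) : MeasurableSet (strip n r R) :=
  measurable_x1 hn measurableSet_Ioo

lemma truncPower_measurable (hn : 1 ≤ n) (β : ℝ) {ψ : Heis n → ℝ} (hψ : Measurable ψ) :
    Measurable (fun ξ => (if 0 < x1 ξ then x1 ξ ^ β else 0) * ψ ξ) := by
  have h := measurable_x1 hn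
  exact (Measurable.ite (measurableSet_lt measurable_const h) (h.pow_const β)
    measurable_const).mul hψ

/-- On a strip at positive distance from the boundary of the half-space the truncated power is
bounded and its increments are controlled by the gauge distance. -/
lemma truncPower_strip (hn : 1 ≤ n) {β r R B : ℝ} (hr : 0 < r) (hB : 0 ≤ B) {ψ : Heis n → ℝ}
    {C : NNReal} (hψL : LipschitzWith C ψ) (hψ0 : ∀ ξ, 0 ≤ ψ ξ) (hψle1 : ∀ ξ, ψ ξ ≤ 1)
    (hψs : ∀ ξ, ψ ξ ≠ 0 → (∀ i, |ξ.1 i| ≤ B) ∧ (∀ i, |ξ.2.1 i| ≤ B))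
    {f : Heis n → ℝ} (hf : f = fun ξ => (if 0 < x1 ξ then x1 ξ ^ β else 0) * ψ ξ) :
    ∃ L : ℝ, 0 ≤ L ∧ (∀ ξ ∈ strip n r R, |f ξ| ≤ L) ∧
      ∀ ξ ∈ strip n r R, ∀ ξ' ∈ strip n r R,
        |f ξ - f ξ'| ≤ L * min 1 (hd (Hmul (Hinv ξ) ξ')) := by
  have hne : ∀ u ∈ Set.Icc r R, u ≠ 0 := fun u hu => (hr.trans_le hu.1).ne'
  have hcd : ContDiffOn ℝ 1 (fun u : ℝ => u ^ β) (Set.Icc r R) :=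
    contDiffOn_id.rpow_const_of_ne hne
  obtain ⟨K, hK⟩ := hcd.exists_lipschitzOnWith one_ne_zero (convex_Icc r R) isCompact_Icc
  obtain ⟨A, hA⟩ := isCompact_Icc.exists_bound_of_continuousOn hcd.continuousOn
  have hfs : ∀ ξ ∈ strip n r R, f ξ = x1 ξ ^ β * ψ ξ := fun ξ hξ => by
    simp only [hf]
    rw [if_pos (hr.trans hξ.1)]
  have hA' : ∀ ξ ∈ strip n r R, 0 ≤ x1 ξ ^ β ∧ x1 ξ ^ β ≤ |A| := fun ξ hξ =>
    ⟨Real.rpow_nonneg (hr.trans hξ.1).le _,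
      (le_abs_self _).trans ((hA _ ⟨hξ.1.le, hξ.2.le⟩).trans (le_abs_self A))⟩
  have hf0 : ∀ ξ ∈ strip n r R, 0 ≤ f ξ ∧ f ξ ≤ |A| := fun ξ hξ => by
    rw [hfs ξ hξ]
    exact ⟨mul_nonneg (hA' ξ hξ).1 (hψ0 ξ),
      (mul_le_of_le_one_right (hA' ξ hξ).1 (hψle1 ξ)).trans (hA' ξ hξ).2⟩
  have hlip : ∀ ξ ∈ strip n r R, ∀ ξ' ∈ strip n r R,
      |f ξ - f ξ'| ≤ (K + |A| * C) * dist ξ ξ' := fun ξ hξ ξ' hξ' => by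
    have e1 : |x1 ξ ^ β - x1 ξ' ^ β| ≤ K * dist ξ ξ' := by
      have h := hK.dist_le_mul (x1 ξ) ⟨hξ.1.le, hξ.2.le⟩ (x1 ξ') ⟨hξ'.1.le, hξ'.2.le⟩
      refine h.trans (mul_le_mul_of_nonneg_left ?_ K.2)
      rw [x1_eq hn, x1_eq hn]
      exact (dist_le_pi_dist _ _ _).trans (le_max_left _ _)
    have e2 : |ψ ξ - ψ ξ'| ≤ C * dist ξ ξ' := hψL.dist_le_mul ξ ξ'
    rw [hfs ξ hξ, hfs ξ' hξ', show x1 ξ ^ β * ψ ξ - x1 ξ' ^ β * ψ ξ' =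
      (x1 ξ ^ β - x1 ξ' ^ β) * ψ ξ + x1 ξ' ^ β * (ψ ξ - ψ ξ') by ring]
    refine (abs_add_le _ _).trans ?_
    rw [abs_mul, abs_mul, abs_of_nonneg (hψ0 ξ), abs_of_nonneg (hA' ξ' hξ').1, add_mul, mul_assoc]
    refine add_le_add ((mul_le_of_le_one_right (abs_nonneg _) (hψle1 ξ)).trans e1) ?_
    exact mul_le_mul (hA' ξ' hξ').2 e2 (abs_nonneg _) (abs_nonneg _)
  have hM0 : 0 ≤ (K + |A| * C) * (1 + 4 * n * B) := by positivity
  -- the case where the first point lies where `ψ` does not vanish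
  have main : ∀ ξ ∈ strip n r R, ∀ ξ' ∈ strip n r R, ψ ξ ≠ 0 →
      |f ξ - f ξ'| ≤ (|A| + (K + |A| * C) * (1 + 4 * n * B)) *
        min 1 (hd (Hmul (Hinv ξ) ξ')) := fun ξ hξ ξ' hξ' hne => by
    rcases le_total (hd (Hmul (Hinv ξ) ξ')) 1 with h | h
    · have h2 := dist_le_hd ξ ξ' (hψs ξ hne).1 (hψs ξ hne).2 hB h
      rw [min_eq_right h, add_mul]
      have h3 := (hlip ξ hξ ξ' hξ').trans (mul_le_mul_of_nonneg_left h2 (by positivity))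
      have h4 := mul_nonneg (abs_nonneg A) (hd_nonneg (Hmul (Hinv ξ) ξ'))
      linarith
    · rw [min_eq_left h, mul_one]
      obtain ⟨a1, a2⟩ := hf0 ξ hξ
      obtain ⟨b1, b2⟩ := hf0 ξ' hξ'
      rw [abs_le]; constructor <;> linarith
  refine ⟨|A| + (K + |A| * C) * (1 + 4 * n * B), by positivity, fun ξ hξ => ?_,
    fun ξ hξ ξ' hξ' => ?_⟩
  · rw [abs_of_nonneg (hf0 ξ hξ).1]
    linarith [(hf0 ξ hξ).2]
  · by_cases h : ψ ξ = 0
    · by_cases h' : ψ ξ' = 0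
      · have : 0 ≤ min 1 (hd (Hmul (Hinv ξ) ξ')) := le_min zero_le_one (hd_nonneg _)
        rw [hfs ξ hξ, hfs ξ' hξ', h, h']
        simp only [mul_zero, sub_zero, abs_zero]
        positivity
      · rw [abs_sub_comm, ← hd_Hinv, Hinv_Hmul]
        exact main ξ' hξ' ξ hξ h'
    · exact main ξ hξ ξ' hξ' (by exact h)

/-- The power `x₁^γ` with `γ > -1` is integrable over a box. -/
lemma integrable_box (hn : 1 ≤ n) {γ : ℝ} (hγ : -1 < γ) (B T : ℝ) (hB : 0 ≤ B) :
    ∃ g : Heis n → ℝ, Integrable g ∧ (∀ ξ, 0 ≤ g ξ) ∧ ∀ ξ, 0 < x1 ξ →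
      (∀ i, |ξ.1 i| ≤ B) → (∀ i, |ξ.2.1 i| ≤ B) → |ξ.2.2| ≤ T → x1 ξ ^ γ = g ξ := by
  set h : Fin n → ℝ → ℝ := fun i => if i = ⟨0, hn⟩ then
    (Set.Ioc 0 B).indicator (fun u => u ^ γ) else (Set.Icc (-B) B).indicator 1 with hh
  have hone : ∀ M : ℝ, Integrable ((Set.Icc (-M) M).indicator (1 : ℝ → ℝ)) := fun M =>
    (integrable_indicator_iff measurableSet_Icc).2 (integrableOn_const (by simp))
  have hpow : Integrable ((Set.Ioc 0 B).indicator (fun u : ℝ => u ^ γ)) := by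
    rw [integrable_indicator_iff measurableSet_Ioc,
      ← intervalIntegrable_iff_integrableOn_Ioc_of_le hB]
    exact intervalIntegral.intervalIntegrable_rpow' hγ
  have hi : ∀ i, Integrable (h i) := fun i => by
    simp only [hh]; split_ifs
    · exact hpow
    · exact hone B
  have hnn : ∀ i u, 0 ≤ h i u := fun i u => by
    simp only [hh]; split_ifs
    · exact Set.indicator_nonneg (fun u hu => Real.rpow_nonneg hu.1.le _) u
    · exact Set.indicator_nonneg (fun u hu => zero_le_one) u
  have hnn1 : ∀ M u : ℝ, 0 ≤ (Set.Icc (-M) M).indicator (1 : ℝ → ℝ) u := fun M u =>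
    Set.indicator_nonneg (fun u hu => zero_le_one) u
  refine ⟨fun ξ => (∏ i, h i (ξ.1 i)) * ((∏ i, (Set.Icc (-B) B).indicator 1 (ξ.2.1 i)) *
    (Set.Icc (-T) T).indicator 1 ξ.2.2), ?_, fun ξ => ?_, fun ξ h0 hx hy ht => ?_⟩
  · have i1 : Integrable (fun x : Fin n → ℝ => ∏ i, h i (x i)) := Integrable.fintype_prod hi
    have i2 : Integrable (fun x : Fin n → ℝ => ∏ i, (Set.Icc (-B) B).indicator (1 : ℝ → ℝ) (x i)) :=
      Integrable.fintype_prod (f := fun _ => (Set.Icc (-B) B).indicator (1 : ℝ → ℝ)) fun _ => hone B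
    exact i1.mul_prod (i2.mul_prod (hone T))
  · exact mul_nonneg (Finset.prod_nonneg fun i _ => hnn i _)
      (mul_nonneg (Finset.prod_nonneg fun i _ => hnn1 _ _) (hnn1 _ _))
  · have e1 : ∏ i, h i (ξ.1 i) = x1 ξ ^ γ := by
      rw [x1_eq hn] at h0 ⊢
      rw [Finset.prod_eq_single ⟨0, hn⟩]
      · simp only [hh, if_true]
        rw [Set.indicator_of_mem]
        exact ⟨h0, (le_abs_self _).trans (hx _)⟩
      · intro i _ hi
        simp only [hh, if_neg hi]
        rw [Set.indicator_of_mem (Set.mem_Icc.2 (abs_le.1 (hx i)))]; rfl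
      · simp
    have e2 : ∏ i, (Set.Icc (-B) B).indicator (1 : ℝ → ℝ) (ξ.2.1 i) = 1 :=
      Finset.prod_eq_one fun i _ => by rw [Set.indicator_of_mem (Set.mem_Icc.2 (abs_le.1 (hy i)))]; rfl
    have e3 : (Set.Icc (-T) T).indicator (1 : ℝ → ℝ) ξ.2.2 = 1 := by
      rw [Set.indicator_of_mem (Set.mem_Icc.2 (abs_le.1 ht))]; rfl
    simp only [e1, e2, e3, mul_one]

/-- Since `β (p - 1) > -1`, the truncated power has an integrable `(p-1)`-th power. -/
lemma truncPower_lintegral (hn : 1 ≤ n) {p β B T : ℝ} (hp1 : 1 < p) (hβ : -(1 / (p - 1)) < β)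
    (hB : 0 ≤ B) {ψ : Heis n → ℝ} (hψ0 : ∀ ξ, 0 ≤ ψ ξ) (hψle1 : ∀ ξ, ψ ξ ≤ 1)
    (hψs : ∀ ξ, ψ ξ ≠ 0 → (∀ i, |ξ.1 i| ≤ B) ∧ (∀ i, |ξ.2.1 i| ≤ B) ∧ |ξ.2.2| ≤ T) :
    ∫⁻ ξ, ENNReal.ofReal
      (|(if 0 < x1 ξ then x1 ξ ^ β else 0) * ψ ξ| ^ (p - 1)) < ⊤ := by
  have hp : 0 < p - 1 := by linarith
  have hγ : -1 < β * (p - 1) := by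
    have := mul_lt_mul_of_pos_right hβ hp
    rwa [neg_mul, one_div_mul_cancel hp.ne'] at this
  obtain ⟨g, hg, hg0, hgx⟩ := integrable_box hn hγ B T hB
  refine lt_of_le_of_lt (lintegral_mono fun ξ => ENNReal.ofReal_le_ofReal ?_) hg.lintegral_lt_top
  by_cases h0 : 0 < x1 ξ
  · by_cases h : ψ ξ = 0
    · rw [h, mul_zero, abs_zero, Real.zero_rpow hp.ne']; exact hg0 ξ
    · obtain ⟨h1, h2, h3⟩ := hψs ξ h
      rw [if_pos h0, ← hgx ξ h0 h1 h2 h3, Real.rpow_mul h0.le]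
      have hpos : 0 ≤ x1 ξ ^ β := Real.rpow_nonneg h0.le _
      rw [abs_of_nonneg (mul_nonneg hpos (hψ0 ξ))]
      exact Real.rpow_le_rpow (mul_nonneg hpos (hψ0 ξ))
        (mul_le_of_le_one_right hpos (hψle1 ξ)) hp.le
  · rw [if_neg h0, zero_mul, abs_zero, Real.zero_rpow hp.ne']; exact hg0 ξ

end

/-- Lemma 5.5: the truncated power function
`u_{β,R₀} = ((x₁)₊)^β ψ` belongs to `W^{s,p,α}_{loc(x₁)}(ℍⁿ₊) ∩ L^{p-1}_{sp,α}(ℍⁿ)`. -/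
theorem truncated_power_membership (n : ℕ) (hn : 1 ≤ n) (p s α : ℝ)
    (hp1 : 1 < p) (hs0 : 0 < s) (hs1 : s < 1)
    (hα0 : 0 ≤ α) (hαQ : α < hQ n - 2) (hαp : α < p * (1 - s))
    (R₀ : ℝ) (hR₀ : 0 < R₀) (β : ℝ) (hβ : -(1 / (p - 1)) < β)
    (ψ : Heis n → ℝ) (hψsm : ContDiff ℝ (⊤ : ℕ∞) ψ) (hψc : HasCompactSupport ψ)
    (hψsupp : tsupport ψ ⊆ boxDt n (R₀ + 1))
    (hψ0 : ∀ ξ, 0 ≤ ψ ξ) (hψle1 : ∀ ξ, ψ ξ ≤ 1)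
    (hψ1 : ∀ ξ ∈ boxD n R₀, ψ ξ = 1)
    (C₀ : ℝ) (hC₀ : 0 < C₀)
    (hdx : ∀ (ξ : Heis n) (i : Fin n), |fderiv ℝ ψ ξ (Pi.single i 1, 0, 0)| ≤ C₀)
    (hdy : ∀ (ξ : Heis n) (i : Fin n), |fderiv ℝ ψ ξ (0, Pi.single i 1, 0)| ≤ C₀)
    (hdt : ∀ ξ : Heis n, |fderiv ℝ ψ ξ (0, 0, 1)| ≤ C₀ / (R₀ + 1)) :
    MemWlocx1 n p s α (fun ξ => (if 0 < x1 ξ then x1 ξ ^ β else 0) * ψ ξ) ∧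
      MemLsp n p s α (fun ξ => (if 0 < x1 ξ then x1 ξ ^ β else 0) * ψ ξ) := by
  have hsupp : ∀ ξ, ψ ξ ≠ 0 → ξ ∈ boxDt n (R₀ + 1) := fun ξ hξ =>
    hψsupp (subset_tsupport ψ hξ)
  have hB : 0 ≤ R₀ + 1 := by linarith
  have hf0 : ∀ ξ, ξ ∉ tsupport ψ → (if 0 < x1 ξ then x1 ξ ^ β else 0) * ψ ξ = 0 := fun ξ hξ => by
    rw [image_eq_zero_of_notMem_tsupport hξ, mul_zero]
  have hmeas := truncPower_measurable hn β hψsm.continuous.measurable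
  have hS : MeasurableSet (tsupport ψ) := (isClosed_tsupport ψ).measurableSet
  have hSfin : volume (tsupport ψ) < ⊤ := IsCompact.measure_lt_top hψc
  have hint := truncPower_lintegral hn hp1 hβ hB hψ0 hψle1 hsupp
  have hp0 : 0 < p := by linarith
  refine ⟨⟨hmeas, fun r R hr _ => ?_⟩, hmeas, fun K _ => ?_, ?_⟩
  · obtain ⟨C, hC⟩ := ContDiff.lipschitzWith_of_hasCompactSupport hψc hψsm (by simp)
    obtain ⟨L, hL0, hL, hLd⟩ := truncPower_strip hn (β := β) (R := R) hr hB hC hψ0 hψle1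
      (fun ξ hξ => ⟨(hsupp ξ hξ).1, (hsupp ξ hξ).2.1⟩) rfl
    refine ⟨?_, gagSem_lt_top hn hp0 hs0 hα0 (by unfold hQ at hαQ; linarith) hαp
      (measurableSet_strip hn r R) hS hSfin hL0 hLd hf0⟩
    calc ∫⁻ ξ in strip n r R,
          ENNReal.ofReal (|(if 0 < x1 ξ then x1 ξ ^ β else 0) * ψ ξ| ^ p)
        ≤ ∫⁻ ξ in strip n r R, (tsupport ψ).indicator (fun _ => ENNReal.ofReal (L ^ p)) ξ := by
          refine setLIntegral_mono' (measurableSet_strip hn r R) fun ξ hξ => ?_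
          by_cases h : ξ ∈ tsupport ψ
          · rw [Set.indicator_of_mem h]
            exact ENNReal.ofReal_le_ofReal (Real.rpow_le_rpow (abs_nonneg _) (hL ξ hξ) hp0.le)
          · rw [hf0 ξ h]; simp [Real.zero_rpow hp0.ne']
      _ ≤ ∫⁻ ξ, (tsupport ψ).indicator (fun _ => ENNReal.ofReal (L ^ p)) ξ :=
          setLIntegral_le_lintegral _ _
      _ < ⊤ := by
          rw [lintegral_indicator_const hS]
          exact ENNReal.mul_lt_top ENNReal.ofReal_lt_top hSfin
  · exact (setLIntegral_le_lintegral _ _).trans_lt hint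
  · -- the weight in the denominator is at least one
    refine lt_of_le_of_lt (lintegral_mono fun ξ => ENNReal.ofReal_le_ofReal ?_) hint
    refine div_le_self (by positivity) (one_le_mul_of_one_le_of_one_le ?_ ?_)
    · exact Real.one_le_rpow (by linarith [hd_nonneg ξ]) (by unfold hQ; positivity)
    · exact Real.one_le_rpow (by linarith [znorm_nonneg ξ]) hα0
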